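/- In the Cholesky setting the curvature satisfies 𝚯 = b⁻¹(∂̄θ − θ̄₁θ − θθ̄₁)b. -/

import Mathlib

/-- An abstract model of the Dolbeault double complex of `(p,q)`-forms on a complex
manifold: a bigraded associative `ℂ`-algebra `Ω = ⨁ Ω^{p,q}`, graded-commutative with
respect to total degree, with `ℂ`-linear operators `∂` (`pd`) and `∂̄` (`pdb`) of
bidegrees `(1,0)` and `(0,1)`, squaring to zero and anticommuting, satisfying the
graded Leibniz rule. -/
structure DolbeaultAlgebra (Ω : Type*) [Ring Ω] [Algebra ℂ Ω] where
  /-- the `ℂ`-subspace of elements of bidegree `(p,q)` -/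
  deg : ℕ → ℕ → Submodule ℂ Ω
  one_mem : (1 : Ω) ∈ deg 0 0
  mul_mem : ∀ {p q p' q'} {a b : Ω}, a ∈ deg p q → b ∈ deg p' q' →
    a * b ∈ deg (p + p') (q + q')
  gcomm : ∀ {p q p' q'} (a b : Ω), a ∈ deg p q → b ∈ deg p' q' →
    a * b = ((-1 : ℂ) ^ ((p + q) * (p' + q'))) • (b * a)
  /-- the operator `∂` -/
  pd : Ω →ₗ[ℂ] Ω
  /-- the operator `∂̄` -/
  pdb : Ω →ₗ[ℂ] Ω
  pd_mem : ∀ {p q} {a : Ω}, a ∈ deg p q → pd a ∈ deg (p + 1) q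
  pdb_mem : ∀ {p q} {a : Ω}, a ∈ deg p q → pdb a ∈ deg p (q + 1)
  pd_pd : ∀ a : Ω, pd (pd a) = 0
  pdb_pdb : ∀ a : Ω, pdb (pdb a) = 0
  pd_pdb : ∀ a : Ω, pd (pdb a) + pdb (pd a) = 0
  pd_leibniz : ∀ {p q} (a b : Ω), a ∈ deg p q →
    pd (a * b) = pd a * b + ((-1 : ℂ) ^ (p + q)) • (a * pd b)
  pdb_leibniz : ∀ {p q} (a b : Ω), a ∈ deg p q →
    pdb (a * b) = pdb a * b + ((-1 : ℂ) ^ (p + q)) • (a * pdb b)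

namespace DolbeaultAlgebra

variable {Ω : Type*} [Ring Ω] [Algebra ℂ Ω] {r : ℕ}

/-- the entrywise extension of `∂` to `r × r` matrices over `Ω` -/
def mpd (A : DolbeaultAlgebra Ω) (M : Matrix (Fin r) (Fin r) Ω) :
    Matrix (Fin r) (Fin r) Ω := M.map A.pd

/-- the entrywise extension of `∂̄` to `r × r` matrices over `Ω` -/
def mpdb (A : DolbeaultAlgebra Ω) (M : Matrix (Fin r) (Fin r) Ω) :
    Matrix (Fin r) (Fin r) Ω := M.map A.pdb

/-- the assertion that all entries of a matrix lie in `Ω^{p,q}` -/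
def MatDeg (A : DolbeaultAlgebra Ω) (p q : ℕ) (M : Matrix (Fin r) (Fin r) Ω) : Prop :=
  ∀ i j, M i j ∈ A.deg p q

end DolbeaultAlgebra

variable {Ω : Type*} [Ring Ω] [Algebra ℂ Ω]

/-!
By the Leibniz rule `h⁻¹∂h = b⁻¹∂b + b⁻¹(c⁻¹∂c)b`, and `b⁻¹∂b = b⁻¹((∂b)b⁻¹)b`, so the connection
form `h⁻¹∂h` is the conjugate `b⁻¹θb`. Since `∂̄b = θ̄₁b` and `∂̄b⁻¹ = -b⁻¹θ̄₁`, applying `∂̄` to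
`b⁻¹Mb` conjugates `∂̄M` minus the graded commutator of `θ̄₁` and `M`; for `M = θ`, which has odd
degree, that commutator is `θ̄₁θ + θθ̄₁`.
-/

theorem matrix_map_mul_of_leibniz {l m n S R F : Type*} [Fintype m]
    [NonUnitalNonAssocSemiring S] [DistribSMul R S] [FunLike F S S] [AddMonoidHomClass F S S]
    (D : F) (ε : R) (M : Matrix l m S) (N : Matrix m n S)
    (hD : ∀ i k j, D (M i k * N k j) = D (M i k) * N k j + ε • (M i k * D (N k j))) :
    (M * N).map D = M.map D * N + ε • (M * N.map D) := by
  ext i j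
  simp only [Matrix.map_apply, Matrix.mul_apply, Matrix.add_apply, Matrix.smul_apply, map_sum, hD,
    Finset.sum_add_distrib, Finset.smul_sum]

namespace DolbeaultAlgebra

variable {A : DolbeaultAlgebra Ω} {r p q p' q' : ℕ} {b c binv cinv M N : Matrix (Fin r) (Fin r) Ω}

theorem MatDeg.add (hM : A.MatDeg p q M) (hN : A.MatDeg p q N) : A.MatDeg p q (M + N) :=
  fun i j => add_mem (hM i j) (hN i j)

theorem MatDeg.mul (hM : A.MatDeg p q M) (hN : A.MatDeg p' q' N) :
    A.MatDeg (p + p') (q + q') (M * N) := fun i j => by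
  rw [Matrix.mul_apply]
  exact sum_mem fun k _ => A.mul_mem (hM i k) (hN k j)

theorem MatDeg.mpd (hM : A.MatDeg p q M) : A.MatDeg (p + 1) q (A.mpd M) :=
  fun i j => A.pd_mem (hM i j)

theorem mpd_mul (hM : A.MatDeg p q M) (N : Matrix (Fin r) (Fin r) Ω) :
    A.mpd (M * N) = A.mpd M * N + (-1 : ℂ) ^ (p + q) • (M * A.mpd N) :=
  matrix_map_mul_of_leibniz A.pd _ M N fun i k _ => A.pd_leibniz _ _ (hM i k)

theorem mpdb_mul (hM : A.MatDeg p q M) (N : Matrix (Fin r) (Fin r) Ω) :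
    A.mpdb (M * N) = A.mpdb M * N + (-1 : ℂ) ^ (p + q) • (M * A.mpdb N) :=
  matrix_map_mul_of_leibniz A.pdb _ M N fun i k _ => A.pdb_leibniz _ _ (hM i k)

theorem pdb_one (A : DolbeaultAlgebra Ω) : A.pdb 1 = 0 := by
  simpa using A.pdb_leibniz 1 1 A.one_mem

theorem mpdb_one (A : DolbeaultAlgebra Ω) : A.mpdb (1 : Matrix (Fin r) (Fin r) Ω) = 0 := by
  ext i j
  by_cases hij : i = j <;> simp [mpdb, hij, pdb_one]

theorem mpdb_inverse (hbinv : A.MatDeg 0 0 binv) (hl : binv * b = 1) (hr : b * binv = 1) :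
    A.mpdb binv = -(binv * (A.mpdb b * binv)) := by
  have leibniz : A.mpdb binv * b + binv * A.mpdb b = 0 := by
    simpa [hl, mpdb_one] using (mpdb_mul hbinv b).symm
  calc A.mpdb binv = A.mpdb binv * b * binv := by rw [mul_assoc, hr, mul_one]
    _ = -(binv * (A.mpdb b * binv)) := by
      rw [eq_neg_of_add_eq_zero_left leibniz, neg_mul, mul_assoc]

theorem mpdb_conj (hbinv : A.MatDeg 0 0 binv) (hl : binv * b = 1) (hr : b * binv = 1)
    (hM : A.MatDeg p q M) :
    A.mpdb (binv * M * b) = binv * (A.mpdb M - A.mpdb b * binv * M +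
      (-1 : ℂ) ^ (p + q) • (M * (A.mpdb b * binv))) * b := by
  have mpdb_b : A.mpdb b = A.mpdb b * binv * b := by rw [mul_assoc, hl, mul_one]
  calc A.mpdb (binv * M * b)
      = A.mpdb binv * (M * b) +
          binv * (A.mpdb M * b + (-1 : ℂ) ^ (p + q) • (M * A.mpdb b)) := by
        rw [mul_assoc, mpdb_mul hbinv, mpdb_mul hM, add_zero, pow_zero, one_smul]
    _ = -(binv * (A.mpdb b * binv)) * (M * b) +
          binv * (A.mpdb M * b + (-1 : ℂ) ^ (p + q) • (M * (A.mpdb b * binv * b))) := by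
        rw [mpdb_inverse hbinv hl hr, ← mpdb_b]
    _ = _ := by
        simp only [mul_add, mul_sub, add_mul, sub_mul, neg_mul, mul_smul_comm, smul_mul_assoc,
          mul_assoc]
        abel

theorem inverse_mul_mpd_mul (hc : A.MatDeg 0 0 c) (hb : binv * b = 1) (hcinv : cinv * c = 1) :
    binv * cinv * A.mpd (c * b) = binv * (A.mpd b * binv + cinv * A.mpd c) * b :=
  calc binv * cinv * A.mpd (c * b)
      = binv * (cinv * A.mpd c * b + cinv * c * A.mpd b) := by
        rw [mpd_mul hc, add_zero, pow_zero, one_smul]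
        simp only [mul_add, mul_assoc]
    _ = binv * (cinv * A.mpd c * b + A.mpd b * (binv * b)) := by
        rw [hcinv, hb, one_mul, mul_one]
    _ = binv * (A.mpd b * binv + cinv * A.mpd c) * b := by noncomm_ring

end DolbeaultAlgebra

open DolbeaultAlgebra in
theorem stmt9_general {A : DolbeaultAlgebra Ω} {r : ℕ}
    {b c binv cinv θ θb₁ : Matrix (Fin r) (Fin r) Ω}
    (hb : A.MatDeg 0 0 b) (hc : A.MatDeg 0 0 c)
    (hbinv : A.MatDeg 0 0 binv) (hcinv : A.MatDeg 0 0 cinv)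
    (hbl : binv * b = 1) (hbr : b * binv = 1) (hcl : cinv * c = 1)
    (hθ : θ = A.mpd b * binv + cinv * A.mpd c) (hθb₁ : θb₁ = A.mpdb b * binv) :
    A.mpdb (binv * cinv * A.mpd (c * b)) = binv * (A.mpdb θ - θb₁ * θ - θ * θb₁) * b := by
  have hθdeg : A.MatDeg 1 0 θ := hθ ▸ (hb.mpd.mul hbinv).add (hcinv.mul hc.mpd)
  calc A.mpdb (binv * cinv * A.mpd (c * b)) = A.mpdb (binv * θ * b) := by
        rw [inverse_mul_mpd_mul hc hbl hcl, ← hθ]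
    _ = binv * (A.mpdb θ - θb₁ * θ + (-1 : ℂ) ^ (1 + 0) • (θ * θb₁)) * b := by
        rw [mpdb_conj hbinv hbl hbr hθdeg, ← hθb₁]
    _ = binv * (A.mpdb θ - θb₁ * θ - θ * θb₁) * b := by
        rw [add_zero, pow_one, neg_one_smul, ← sub_eq_add_neg]

/-- In the Cholesky setting the curvature satisfies
`BΘ = b⁻¹(∂̄θ - θ̄₁θ - θθ̄₁)b`. -/
theorem stmt9
    (A : DolbeaultAlgebra Ω) (r : ℕ) (hr : 1 ≤ r)
    (b c binv cinv : Matrix (Fin r) (Fin r) Ω)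
    (hbdeg : A.MatDeg 0 0 b) (hcdeg : A.MatDeg 0 0 c)
    (hbinvdeg : A.MatDeg 0 0 binv) (hcinvdeg : A.MatDeg 0 0 cinv)
    (hbu : ∀ i j : Fin r, j < i → b i j = 0) (hbd : ∀ i : Fin r, b i i = 1)
    (hcl : ∀ i j : Fin r, i < j → c i j = 0)
    (hbinvl : binv * b = 1) (hbinvr : b * binv = 1)
    (hcinvl : cinv * c = 1) (hcinvr : c * cinv = 1)
    (h hinv : Matrix (Fin r) (Fin r) Ω) (hh : h = c * b) (hhinv : hinv = binv * cinv)
    (θ₁ θ₂ θ θb₁ θb₂ θb : Matrix (Fin r) (Fin r) Ω)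
    (hθ₁ : θ₁ = A.mpd b * binv) (hθ₂ : θ₂ = cinv * A.mpd c) (hθ : θ = θ₁ + θ₂)
    (hθb₁ : θb₁ = A.mpdb b * binv) (hθb₂ : θb₂ = cinv * A.mpdb c) (hθb : θb = θb₁ + θb₂)
    (Bθ Bθb BΘ : Matrix (Fin r) (Fin r) Ω)
    (hBθ : Bθ = hinv * A.mpd h) (hBθb : Bθb = hinv * A.mpdb h) (hBΘ : BΘ = A.mpdb Bθ) :
    BΘ = binv * (A.mpdb θ - θb₁ * θ - θ * θb₁) * b := by
  subst hBΘ hBθ hhinv hh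
  exact stmt9_general hbdeg hcdeg hbinvdeg hcinvdeg hbinvl hbinvr hcinvl
    (by rw [hθ, hθ₁, hθ₂]) hθb₁
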